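/- Let n ≥ 7 and let u : ℝⁿ \ {0} → ℝ be a smooth homogeneous solution of (−Δ)³u = |u|^{p−1}u on ℝⁿ \ {0}, i.e. u(x) = |x|^{−6/(p−1)} u(x/|x|) for all x ≠ 0, which is stable in ℝⁿ \ {0}: for every smooth φ compactly supported in ℝⁿ \ {0}, ∫ ‖∇(Δφ)‖² dx ≥ p ∫ |u|^{p−1} φ² dx. If (n+6)/(n−6) < p and, in the case n ≥ 15, additionally p < p_c(n), then u is identically zero. -/

import Mathlib

open MeasureTheory Filter

noncomputable section

/-- The Euclidean Laplacian of `u` at `x`. -/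
def laplacian {n : ℕ} (u : EuclideanSpace ℝ (Fin n) → ℝ) (x : EuclideanSpace ℝ (Fin n)) : ℝ :=
  ∑ i : Fin n, iteratedFDeriv ℝ 2 u x ![EuclideanSpace.single i 1, EuclideanSpace.single i 1]

def dd1 (n : ℝ) : ℝ :=
  -108*n^6 + 1296*n^5 - 3024*n^4 - 10368*n^3 + 103104*n^2 + 20736*n - 94976

def dd2 (n : ℝ) : ℝ :=
  9*n^12 - 216*n^11 + 1800*n^10 - 4320*n^9 - 30864*n^8 + 251136*n^7 - 690432*n^6
    - 1936384*n^5 + 6915840*n^4 + 4818944*n^3 - 16644096*n^2 - 3039232*n + 6131712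

/-- `d₀(n)`, the real cube root of `-(d₁(n) + 36√(d₂(n)))`. -/
def dd0 (n : ℝ) : ℝ := (-(dd1 n + 36 * Real.sqrt (dd2 n))) ^ ((1 : ℝ)/3)

def dfn (n : ℝ) : ℝ :=
  (1/6) * Real.sqrt (9*n^2 + 96 - (1536 + 1152*n^2) / dd0 n - (3/2) * dd0 n)

/-- The Joseph–Lundgren exponent `p_c(n)` (for `n ≥ 15`; `p_c(n) = +∞` for `n ≤ 14`,
which is encoded by imposing the bound `p < pc n` only when `15 ≤ n`). -/
def pc (n : ℝ) : ℝ := (n + 4 - 2 * dfn n) / (n - 8 - 2 * dfn n)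

/-!
In logarithmic polar coordinates `u = r ^ (-k) w(θ)` with `k = 6 / (p - 1)`, and
`Δ (r ^ (-s) w) = r ^ (-s - 2) (Δ_S - s (n - 2 - s)) w`. The equation therefore reads
`(Δ_S - a₂) (Δ_S - a₁) (Δ_S - a₀) w = -|w| ^ (p - 1) w` on the sphere, with
`aᵢ = (k + 2 i) (n - 2 - k - 2 i)`. Testing stability with `r ^ (-(n - 6) / 2) w(θ) h(ε log r)` and
letting `ε → 0` gives `p ∫ |w| ^ (p - 1) w ^ 2 ≤ -∫ w (Δ_S - b) (Δ_S - c) (Δ_S - b) w`, where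
`b = (n - 6) (n + 2) / 4` and `c = (n - 2) ^ 2 / 4`. Expanding both cubics in the moments
`(-1) ^ j ∫ w (Δ_S) ^ j w ≥ 0` and eliminating the nonlinear term leaves a sum of nonnegative terms
that is nonpositive, in which `∫ w ^ 2` has the coefficient `p a₀ a₁ a₂ - b c b`. The latter is
positive exactly below the Joseph–Lundgren exponent, a root of a cubic solved by Cardano's formula.
-/

section Calculus

open scoped Laplacian Gradient RealInnerProductSpace

variable {E : Type*} [NormedAddCommGroup E] [InnerProductSpace ℝ E] {f g : E → ℝ} {x : E}

local notation "dim" => Module.finrank ℝ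

lemma differentiableAt_fderiv_apply (hf : ContDiffAt ℝ 2 f x) (v : E) :
    DifferentiableAt ℝ (fun y ↦ fderiv ℝ f y v) x :=
  ((hf.fderiv_right (m := 1) le_rfl).clm_apply contDiffAt_const).differentiableAt one_ne_zero

lemma eventually_differentiableAt (hf : ContDiffAt ℝ 2 f x) :
    ∀ᶠ y in nhds x, DifferentiableAt ℝ f y :=
  (hf.eventually (by simp)).mono fun _ hy ↦ hy.differentiableAt two_ne_zero

lemma contDiffAt_log_norm {k : WithTop ℕ∞} (hx : x ≠ 0) :
    ContDiffAt ℝ k (fun y : E ↦ Real.log ‖y‖) x :=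
  (contDiffAt_norm ℝ hx).log (norm_ne_zero_iff.2 hx)

variable [FiniteDimensional ℝ E]

lemma laplacian_eq_sum_fderiv_fderiv {ι : Type*} [Fintype ι] (b : OrthonormalBasis ι ℝ E)
    (hf : ContDiffAt ℝ 2 f x) :
    Δ f x = ∑ i, fderiv ℝ (fun y ↦ fderiv ℝ f y (b i)) x (b i) := by
  have hf' : DifferentiableAt ℝ (fderiv ℝ f) x :=
    (hf.fderiv_right (m := 1) le_rfl).differentiableAt one_ne_zero
  simp [InnerProductSpace.laplacian_eq_iteratedFDeriv_orthonormalBasis f b,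
    iteratedFDeriv_two_apply, fderiv_clm_apply hf' (differentiableAt_const _)]

lemma sum_fderiv_mul_fderiv {ι : Type*} [Fintype ι] (b : OrthonormalBasis ι ℝ E) (f g : E → ℝ)
    (x : E) : ∑ i, fderiv ℝ f x (b i) * fderiv ℝ g x (b i) = ⟪∇ f x, ∇ g x⟫ := by
  simp only [← b.sum_inner_mul_inner (∇ f x) (∇ g x), inner_gradient_left, inner_gradient_right,
    RCLike.conj_to_real]

lemma laplacian_mul (hf : ContDiffAt ℝ 2 f x) (hg : ContDiffAt ℝ 2 g x) :
    Δ (fun y ↦ f y * g y) x = f x * Δ g x + 2 * ⟪∇ f x, ∇ g x⟫ + g x * Δ f x := by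
  let b := stdOrthonormalBasis ℝ E
  have hfirst (v : E) : (fun y ↦ fderiv ℝ (fun z ↦ f z * g z) y v) =ᶠ[nhds x]
      fun y ↦ f y * fderiv ℝ g y v + g y * fderiv ℝ f y v := by
    filter_upwards [eventually_differentiableAt hf, eventually_differentiableAt hg] with y hfy hgy
    simp [fderiv_fun_mul hfy hgy]
  have hsecond (v : E) : fderiv ℝ (fun y ↦ fderiv ℝ (fun z ↦ f z * g z) y v) x v =
      f x * fderiv ℝ (fun y ↦ fderiv ℝ g y v) x v + 2 * (fderiv ℝ f x v * fderiv ℝ g x v)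
        + g x * fderiv ℝ (fun y ↦ fderiv ℝ f y v) x v := by
    have hf₁ := hf.differentiableAt two_ne_zero
    have hg₁ := hg.differentiableAt two_ne_zero
    have hf₂ := differentiableAt_fderiv_apply hf v
    have hg₂ := differentiableAt_fderiv_apply hg v
    rw [(hfirst v).fderiv_eq, fderiv_fun_add (hf₁.fun_mul hg₂) (hg₁.fun_mul hf₂),
      fderiv_fun_mul hf₁ hg₂, fderiv_fun_mul hg₁ hf₂]
    simp only [add_apply, smul_apply, smul_eq_mul]
    ring
  simp only [laplacian_eq_sum_fderiv_fderiv b (hf.mul hg), laplacian_eq_sum_fderiv_fderiv b hf,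
    laplacian_eq_sum_fderiv_fderiv b hg, ← sum_fderiv_mul_fderiv b, hsecond,
    Finset.sum_add_distrib, Finset.mul_sum]

lemma laplacian_comp_left {H : ℝ → ℝ} (hH : ContDiff ℝ 2 H) (hf : ContDiffAt ℝ 2 f x) :
    Δ (fun y ↦ H (f y)) x = deriv (deriv H) (f x) * ‖∇ f x‖ ^ 2 + deriv H (f x) * Δ f x := by
  let b := stdOrthonormalBasis ℝ E
  have hdiff {K : ℝ → ℝ} (hK : Differentiable ℝ K) {y : E} (hy : DifferentiableAt ℝ f y) (v : E) :
      fderiv ℝ (fun z ↦ K (f z)) y v = deriv K (f y) * fderiv ℝ f y v := by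
    rw [fderiv_fun_comp y (hK _) hy]
    simp [mul_comm]
  have hH₁ : Differentiable ℝ H := hH.differentiable two_ne_zero
  have hH₂ : Differentiable ℝ (deriv H) := hH.differentiable_deriv_two
  have hf₁ := hf.differentiableAt two_ne_zero
  have hsecond (v : E) : fderiv ℝ (fun y ↦ fderiv ℝ (fun z ↦ H (f z)) y v) x v =
      deriv (deriv H) (f x) * (fderiv ℝ f x v * fderiv ℝ f x v)
        + deriv H (f x) * fderiv ℝ (fun y ↦ fderiv ℝ f y v) x v := by
    have hfirst : (fun y ↦ fderiv ℝ (fun z ↦ H (f z)) y v) =ᶠ[nhds x]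
        fun y ↦ deriv H (f y) * fderiv ℝ f y v :=
      (eventually_differentiableAt hf).mono fun y hy ↦ hdiff hH₁ hy v
    rw [hfirst.fderiv_eq,
      fderiv_fun_mul ((hH₂ _).fun_comp' x hf₁) (differentiableAt_fderiv_apply hf v)]
    simp only [add_apply, smul_apply, smul_eq_mul, hdiff hH₂ hf₁]
    ring
  rw [laplacian_eq_sum_fderiv_fderiv b (hH.contDiffAt.fun_comp x hf),
    laplacian_eq_sum_fderiv_fderiv b hf, ← real_inner_self_eq_norm_sq, ← sum_fderiv_mul_fderiv b]
  simp only [hsecond, Finset.sum_add_distrib, Finset.mul_sum]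

lemma hasGradientAt_log_norm (hx : x ≠ 0) :
    HasGradientAt (fun y : E ↦ Real.log ‖y‖) ((‖x‖ ^ 2)⁻¹ • x) x := by
  have hlog : (fun y : E ↦ Real.log ‖y‖) = fun y ↦ 2⁻¹ * Real.log (‖y‖ ^ 2) := by
    ext y
    simp [Real.log_pow]
  rw [hasGradientAt_iff_hasFDerivAt, hlog]
  refine (((hasStrictFDerivAt_norm_sq x).hasFDerivAt.log (by positivity)).const_mul
    2⁻¹).congr_fderiv ?_
  ext v
  simp only [smul_apply, coe_innerSL_apply, nsmul_eq_mul, Nat.cast_ofNat, smul_eq_mul, map_smul,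
    InnerProductSpace.toDual_apply_apply]
  ring

lemma gradient_log_norm (hx : x ≠ 0) :
    ∇ (fun y : E ↦ Real.log ‖y‖) x = (‖x‖ ^ 2)⁻¹ • x :=
  (hasGradientAt_log_norm hx).gradient

lemma norm_gradient_log_norm_sq (hx : x ≠ 0) :
    ‖∇ (fun y : E ↦ Real.log ‖y‖) x‖ ^ 2 = (‖x‖ ^ 2)⁻¹ := by
  rw [gradient_log_norm hx, norm_smul, norm_inv, norm_pow, norm_norm]
  field_simp [norm_ne_zero_iff.2 hx]

lemma laplacian_log_norm (hx : x ≠ 0) :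
    Δ (fun y : E ↦ Real.log ‖y‖) x = (dim E - 2) * (‖x‖ ^ 2)⁻¹ := by
  let b := stdOrthonormalBasis ℝ E
  have hfirst (v : E) : (fun y ↦ fderiv ℝ (fun z : E ↦ Real.log ‖z‖) y v) =ᶠ[nhds x]
      fun y ↦ (‖y‖ ^ 2)⁻¹ * ⟪y, v⟫ := by
    filter_upwards [isOpen_ne.mem_nhds hx] with y hy
    rw [← inner_gradient_left, gradient_log_norm hy, real_inner_smul_left]
  have hsecond (v : E) : fderiv ℝ (fun y ↦ fderiv ℝ (fun z : E ↦ Real.log ‖z‖) y v) x v =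
      (‖x‖ ^ 2)⁻¹ * ‖v‖ ^ 2 - 2 * ((‖x‖ ^ 2)⁻¹ ^ 2 * (⟪x, v⟫ * ⟪v, x⟫)) := by
    have hinv : HasFDerivAt (fun y : E ↦ (‖y‖ ^ 2)⁻¹) _ x :=
      (hasDerivAt_inv (by positivity)).comp_hasFDerivAt x (hasStrictFDerivAt_norm_sq x).hasFDerivAt
    have hinner : HasFDerivAt (fun y : E ↦ ⟪y, v⟫) _ x :=
      (hasFDerivAt_id x).inner ℝ (hasFDerivAt_const v x)
    rw [(hfirst v).fderiv_eq, (hinv.fun_mul hinner).fderiv]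
    simp only [add_apply, smul_apply, neg_apply, zero_apply, ContinuousLinearMap.comp_apply,
      ContinuousLinearMap.prod_apply, ContinuousLinearMap.id_apply, fderivInnerCLM_apply,
      inner_zero_right, real_inner_self_eq_norm_sq, zero_add, smul_eq_mul, coe_innerSL_apply,
      nsmul_eq_mul, Nat.cast_ofNat, neg_smul, inv_pow, id_eq, real_inner_comm x v]
    ring
  simp only [laplacian_eq_sum_fderiv_fderiv b (contDiffAt_log_norm hx), hsecond,
    Finset.sum_sub_distrib, ← Finset.mul_sum, b.sum_inner_mul_inner, b.norm_eq_one,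
    real_inner_self_eq_norm_sq]
  simp only [one_pow, Finset.sum_const, Finset.card_univ, Fintype.card_fin, nsmul_eq_mul, mul_one]
  field_simp [norm_ne_zero_iff.2 hx]

section Green

variable [MeasurableSpace E] [BorelSpace E]

lemma integrable_mul_of_continuousAt_tsupport {φ h : E → ℝ} (hφ : Continuous φ)
    (hφc : HasCompactSupport φ) (hh : ∀ x ∈ tsupport φ, ContinuousAt h x) :
    Integrable (fun x ↦ φ x * h x) :=
  (continuous_of_tsupport fun x hx ↦ hφ.continuousAt.mul
    (hh x (tsupport_mul_subset_left hx))).integrable_of_hasCompactSupport hφc.mul_right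

lemma integral_mul_laplacian (hg : ContDiff ℝ 1 g) (hgc : HasCompactSupport g)
    (hf : ∀ x ∈ tsupport g, ContDiffAt ℝ 2 f x) :
    ∫ x, g x * Δ f x = -∫ x, ⟪∇ g x, ∇ f x⟫ := by
  let b := stdOrthonormalBasis ℝ E
  let D (i : Fin (dim E)) (h : E → ℝ) (x : E) : ℝ := fderiv ℝ h x (b i)
  have hlap (x : E) : g x * Δ f x = ∑ i, g x * D i (D i f) x := by
    by_cases hx : x ∈ tsupport g
    · rw [laplacian_eq_sum_fderiv_fderiv b (hf x hx), Finset.mul_sum]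
    · simp [image_eq_zero_of_notMem_tsupport hx]
  have hDf (i) {x : E} (hx : x ∈ tsupport g) : ContDiffAt ℝ 1 (D i f) x :=
    ((hf x hx).fderiv_right le_rfl).clm_apply contDiffAt_const
  have hDDf (i) {x : E} (hx : x ∈ tsupport g) : ContinuousAt (D i (D i f)) x :=
    (((hDf i hx).fderiv_right (m := 0) le_rfl).clm_apply contDiffAt_const).continuousAt
  have hg_DDf (i) : Integrable fun x ↦ g x * D i (D i f) x :=
    integrable_mul_of_continuousAt_tsupport hg.continuous hgc fun x hx ↦ hDDf i hx
  have hDg_Df (i) : Integrable fun x ↦ D i g x * D i f x := by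
    have hsub : tsupport (D i g) ⊆ tsupport g := closure_minimal
      (fun x hx ↦ support_fderiv_subset ℝ fun h0 ↦ hx (by simp [D, h0])) isClosed_closure
    exact integrable_mul_of_continuousAt_tsupport
      ((hg.continuous_fderiv one_ne_zero).clm_apply continuous_const)
      (hgc.of_isClosed_subset isClosed_closure hsub)
      fun x hx ↦ (hDf i (hsub hx)).continuousAt
  simp only [hlap, ← sum_fderiv_mul_fderiv b]
  rw [integral_finsetSum _ fun i _ ↦ hg_DDf i, integral_finsetSum _ fun i _ ↦ hDg_Df i,
    ← Finset.sum_neg_distrib]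
  exact Finset.sum_congr rfl fun i _ ↦ integral_mul_fderiv_eq_neg_fderiv_mul_of_integrable
    (hDg_Df i) (hg_DDf i)
    (integrable_mul_of_continuousAt_tsupport hg.continuous hgc fun x hx ↦ (hDf i hx).continuousAt)
    (fun x _ ↦ hg.differentiable one_ne_zero x)
    (fun x hx ↦ (hDf i hx).differentiableAt one_ne_zero)

end Green

end Calculus

section TestFunctions

open scoped ContDiff Topology

variable {V : Type*} [NormedAddCommGroup V] [NormedSpace ℝ V] {U : Set V} {φ ψ : V → ℝ} {η : ℝ → ℝ}

/-- Membership in `C_c^∞(U)`, the space of admissible test functions on `U`. The radial cut-offs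
are functions of `log ‖x‖` taken from `C_c^∞(0, ∞)`, so that they vanish on the unit ball and
hence ignore the junk value `Real.log 0 = 0`. -/
structure IsTestFunction (U : Set V) (φ : V → ℝ) : Prop where
  contDiff : ContDiff ℝ ∞ φ
  hasCompactSupport : HasCompactSupport φ
  tsupport_subset : tsupport φ ⊆ U

namespace IsTestFunction

lemma deriv {U : Set ℝ} (hη : IsTestFunction U η) : IsTestFunction U (deriv η) where
  contDiff := (contDiff_infty_iff_deriv.1 hη.contDiff).2
  hasCompactSupport := hη.hasCompactSupport.deriv
  tsupport_subset := tsupport_deriv_subset.trans hη.tsupport_subset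

lemma iteratedDeriv {U : Set ℝ} (hη : IsTestFunction U η) (k : ℕ) :
    IsTestFunction U (iteratedDeriv k η) := by
  induction k with
  | zero => rwa [iteratedDeriv_zero]
  | succ k ih => rw [iteratedDeriv_succ]; exact ih.deriv

lemma const_mul (hφ : IsTestFunction U φ) (c : ℝ) :
    IsTestFunction U fun x ↦ c * φ x where
  contDiff := contDiff_const.mul hφ.contDiff
  hasCompactSupport := hφ.hasCompactSupport.mul_left
  tsupport_subset := tsupport_mul_subset_right.trans hφ.tsupport_subset

lemma mul (hφ : IsTestFunction U φ) (hψ : IsTestFunction U ψ) :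
    IsTestFunction U fun x ↦ φ x * ψ x where
  contDiff := hφ.contDiff.mul hψ.contDiff
  hasCompactSupport := hφ.hasCompactSupport.mul_right
  tsupport_subset := tsupport_mul_subset_left.trans hφ.tsupport_subset

lemma comp_const_mul (hη : IsTestFunction (Set.Ioi 0) η) {ε : ℝ} (hε : 0 < ε) :
    IsTestFunction (Set.Ioi 0) fun t ↦ η (ε * t) where
  contDiff := hη.contDiff.comp (contDiff_const.mul contDiff_id)
  hasCompactSupport := hη.hasCompactSupport.comp_homeomorph (Homeomorph.mulLeft₀ ε hε.ne')
  tsupport_subset t ht := by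
    have hεt : ε * t ∈ tsupport η :=
      tsupport_comp_subset_preimage η (continuous_const_mul ε) ht
    exact pos_of_mul_pos_right (hη.tsupport_subset hεt) hε.le

end IsTestFunction

lemma exists_isTestFunction_Ioi : ∃ η : ℝ → ℝ, IsTestFunction (Set.Ioi 0) η ∧ (∀ t, 0 ≤ η t) ∧
    0 < ∫ t, η t ∧ 0 < ∫ t, η t ^ 2 := by
  obtain ⟨η, hsupp, hc, hη, hrange, hη₁⟩ :=
    exists_contDiff_tsupport_subset (n := ⊤) (Ioi_mem_nhds (zero_lt_one (α := ℝ)))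
  have hη₀ (t : ℝ) : 0 ≤ η t := (hrange ⟨t, rfl⟩).1
  refine ⟨η, ⟨hη, hc, hsupp⟩, hη₀, ?_, ?_⟩
  · exact hη.continuous.integral_pos_of_hasCompactSupport_nonneg_nonzero hc hη₀
      (x := 1) (by simp [hη₁])
  · exact (hη.continuous.pow 2).integral_pos_of_hasCompactSupport_nonneg_nonzero
      (hc.comp_left (g := (· ^ 2)) (by simp)) (fun t ↦ sq_nonneg _) (x := 1) (by simp [hη₁])

end TestFunctions

section Angular

open scoped ContDiff Laplacian Gradient RealInnerProductSpace

variable {E : Type*} [NormedAddCommGroup E]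

/-- The function `f(x) r ^ (-s) η(log r)` with `r = ‖x‖`, a product of an angular and a radial
factor in logarithmic polar coordinates. -/
def separated (f : E → ℝ) (s : ℝ) (η : ℝ → ℝ) (x : E) : ℝ :=
  f x * (Real.exp (-(s * Real.log ‖x‖)) * η (Real.log ‖x‖))

lemma separated_mul_separated (f g : E → ℝ) (s t : ℝ) (η ζ : ℝ → ℝ) (x : E) :
    separated f s η x * separated g t ζ x =
      separated (fun y ↦ f y * g y) (s + t) (fun r ↦ η r * ζ r) x := by
  simp only [separated, add_mul, neg_add, Real.exp_add]
  ring

variable [InnerProductSpace ℝ E] {f g : E → ℝ}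

local notation "dim" => Module.finrank ℝ

/-- A smooth function on the unit sphere, encoded by its extension to `E` that is positively
homogeneous of degree zero; its value at the origin is irrelevant. -/
structure IsAngular (f : E → ℝ) : Prop where
  contDiffAt : ∀ ⦃x⦄, x ≠ 0 → ContDiffAt ℝ ∞ f x
  apply_smul : ∀ ⦃c : ℝ⦄, 0 < c → ∀ x, f (c • x) = f x

/-- The spherical Laplacian `Δ_S`, read on degree-zero homogeneous functions. -/
def sphericalLaplacian [FiniteDimensional ℝ E] (f : E → ℝ) (x : E) : ℝ := ‖x‖ ^ 2 * Δ f x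

/-- The operator `Δ_S - b`. -/
def shiftedLaplacian [FiniteDimensional ℝ E] (b : ℝ) (f : E → ℝ) (x : E) : ℝ :=
  sphericalLaplacian f x - b * f x

/-- The integral of `f` over the unit sphere. -/
def sphericalIntegral [MeasureSpace E] (f : E → ℝ) : ℝ :=
  ∫ θ : Metric.sphere (0 : E) 1, f θ ∂(volume : Measure E).toSphere

namespace IsAngular

lemma mul (hf : IsAngular f) (hg : IsAngular g) : IsAngular fun x ↦ f x * g x where
  contDiffAt _ hx := (hf.contDiffAt hx).mul (hg.contDiffAt hx)
  apply_smul _ hc x := by rw [hf.apply_smul hc, hg.apply_smul hc]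

lemma sub (hf : IsAngular f) (hg : IsAngular g) : IsAngular fun x ↦ f x - g x where
  contDiffAt _ hx := (hf.contDiffAt hx).sub (hg.contDiffAt hx)
  apply_smul _ hc x := by rw [hf.apply_smul hc, hg.apply_smul hc]

lemma const_mul (hf : IsAngular f) (a : ℝ) : IsAngular fun x ↦ a * f x where
  contDiffAt _ hx := contDiffAt_const.mul (hf.contDiffAt hx)
  apply_smul _ hc x := by rw [hf.apply_smul hc]

lemma differentiableAt (hf : IsAngular f) {x : E} (hx : x ≠ 0) : DifferentiableAt ℝ f x :=
  (hf.contDiffAt hx).differentiableAt (by simp)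

lemma contDiffAt_two (hf : IsAngular f) {x : E} (hx : x ≠ 0) : ContDiffAt ℝ 2 f x :=
  (hf.contDiffAt hx).of_le ENat.LEInfty.out

lemma fderiv_smul (hf : IsAngular f) {c : ℝ} (hc : 0 < c) (x : E) :
    fderiv ℝ f (c • x) = c⁻¹ • fderiv ℝ f x := by
  have hfc : (fun y ↦ f (c • y)) = f := funext (hf.apply_smul hc)
  rw [← inv_smul_smul₀ hc.ne' (fderiv ℝ f (c • x)), ← fderiv_comp_smul, hfc]

lemma eq_zero_of_forall_norm_eq_one (hf : IsAngular f) (h : ∀ x, ‖x‖ = 1 → f x = 0) {x : E}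
    (hx : x ≠ 0) : f x = 0 := by
  rw [← hf.apply_smul (inv_pos.2 (norm_pos_iff.2 hx)) x]
  exact h _ (norm_smul_inv_norm hx)

variable [FiniteDimensional ℝ E]

lemma inner_gradient_self (hf : IsAngular f) {x : E} (hx : x ≠ 0) : ⟪∇ f x, x⟫ = 0 := by
  have hcurve : HasDerivAt (fun c : ℝ ↦ c • x) x 1 := by
    simpa using (hasDerivAt_id (1 : ℝ)).smul_const x
  have hcomp : HasDerivAt (fun c : ℝ ↦ f (c • x)) (fderiv ℝ f x x) 1 :=
    HasFDerivAt.comp_hasDerivAt_of_eq 1 (hf.differentiableAt hx).hasFDerivAt hcurve (by simp)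
  have hconst : HasDerivAt (fun c : ℝ ↦ f (c • x)) 0 1 :=
    (hasDerivAt_const (1 : ℝ) (f x)).congr_of_eventuallyEq <|
      (lt_mem_nhds one_pos).mono fun c hc ↦ hf.apply_smul hc x
  rw [inner_gradient_left, hcomp.unique hconst]

lemma laplacian_smul (hf : IsAngular f) {c : ℝ} (hc : 0 < c) (x : E) :
    Δ f (c • x) = (c ^ 2)⁻¹ * Δ f x := by
  have hfirst : (fun y ↦ fderiv ℝ f (c • y)) = c⁻¹ • fderiv ℝ f := funext (hf.fderiv_smul hc)
  have hsecond : fderiv ℝ (fderiv ℝ f) (c • x) = c⁻¹ • c⁻¹ • fderiv ℝ (fderiv ℝ f) x := by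
    rw [← inv_smul_smul₀ hc.ne' (fderiv ℝ (fderiv ℝ f) (c • x)), ← fderiv_comp_smul c, hfirst]
    exact congrArg (c⁻¹ • ·)
      (congrFun (fderiv_const_smul_field (R := ℝ) (f := fderiv ℝ f) c⁻¹) x)
  simp only [InnerProductSpace.laplacian_eq_iteratedFDeriv_stdOrthonormalBasis,
    iteratedFDeriv_two_apply, hsecond, Finset.mul_sum]
  refine Finset.sum_congr rfl fun i _ ↦ ?_
  simp only [smul_apply, smul_eq_mul]
  ring

end IsAngular

lemma contDiffAt_laplacian [FiniteDimensional ℝ E] {x : E} (hf : ContDiffAt ℝ ∞ f x) :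
    ContDiffAt ℝ ∞ (Δ f) x := by
  rw [InnerProductSpace.laplacian_eq_iteratedFDeriv_stdOrthonormalBasis]
  refine ContDiffAt.sum fun i _ ↦ ?_
  have h : ContDiffAt ℝ ∞ (iteratedFDeriv ℝ 2 f) x := hf.iteratedFDeriv_right le_rfl
  exact (ContinuousMultilinearMap.apply ℝ _ ℝ _).contDiff.contDiffAt.comp x h

namespace IsAngular

variable [FiniteDimensional ℝ E]

protected lemma sphericalLaplacian (hf : IsAngular f) : IsAngular (sphericalLaplacian f) where
  contDiffAt _ hx := (contDiff_norm_sq ℝ).contDiffAt.mul (contDiffAt_laplacian (hf.contDiffAt hx))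
  apply_smul c hc x := by
    rw [sphericalLaplacian, sphericalLaplacian, hf.laplacian_smul hc, norm_smul,
      Real.norm_of_nonneg hc.le]
    field_simp

protected lemma shiftedLaplacian (hf : IsAngular f) (b : ℝ) : IsAngular (shiftedLaplacian b f) :=
  hf.sphericalLaplacian.sub (hf.const_mul b)

end IsAngular

section Polar

variable [FiniteDimensional ℝ E] [MeasurableSpace E] [BorelSpace E] [Nontrivial E]

lemma integral_Ioi_pow_mul_fun (g : ℝ → ℝ) (k : ℕ) :
    ∫ r : Set.Ioi (0 : ℝ), g r ∂Measure.volumeIoiPow k = ∫ r in Set.Ioi 0, r ^ k * g r := by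
  simp only [Measure.volumeIoiPow, ENNReal.ofReal]
  rw [integral_withDensity_eq_integral_smul (measurable_subtype_coe.pow_const _).real_toNNReal,
    integral_subtype_comap measurableSet_Ioi fun a ↦ Real.toNNReal (a ^ k) • g a]
  refine setIntegral_congr_fun measurableSet_Ioi fun r hr ↦ ?_
  simp only [NNReal.smul_def, Real.coe_toNNReal _ (pow_nonneg (le_of_lt hr) k), smul_eq_mul]

lemma integral_Ioi_inv_mul_comp_log (K : ℝ → ℝ) :
    ∫ r in Set.Ioi (0 : ℝ), r⁻¹ * K (Real.log r) = ∫ t, K t := by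
  have h := integral_image_eq_integral_abs_deriv_smul MeasurableSet.univ
    (fun t _ ↦ (Real.hasDerivAt_exp t).hasDerivWithinAt) Real.exp_injective.injOn
    (fun r ↦ r⁻¹ * K (Real.log r))
  rw [Set.image_univ, Real.range_exp, Measure.restrict_univ] at h
  simpa [← mul_assoc] using h

lemma integral_mul_comp_norm (hf : ∀ c : ℝ, 0 < c → ∀ x, f (c • x) = f x) (g : ℝ → ℝ) :
    ∫ x, f x * g ‖x‖ = sphericalIntegral f * ∫ r in Set.Ioi 0, r ^ (dim E - 1) * g r := by
  calc
    ∫ x, f x * g ‖x‖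
        = ∫ x : ({0}ᶜ : Set E), f x * g ‖(x : E)‖ ∂volume.comap Subtype.val := by
      rw [integral_subtype_comap (measurableSet_singleton _).compl fun x ↦ f x * g ‖x‖,
        restrict_compl_singleton]
    _ = ∫ z, f z.1 * g z.2
          ∂(volume : Measure E).toSphere.prod (.volumeIoiPow (dim E - 1)) := by
      rw [← (volume : Measure E).measurePreserving_homeomorphUnitSphereProd.integral_comp
        (Homeomorph.measurableEmbedding _)]
      refine integral_congr_ae (.of_forall fun x ↦ ?_)
      simp [hf _ (inv_pos.2 (norm_pos_iff.2 x.2))]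
    _ = sphericalIntegral f * ∫ r in Set.Ioi 0, r ^ (dim E - 1) * g r := by
      rw [integral_prod_mul (f := fun θ : Metric.sphere (0 : E) 1 ↦ f θ)
        (g := fun r : Set.Ioi (0 : ℝ) ↦ g r), integral_Ioi_pow_mul_fun]
      rfl

lemma integral_separated (hf : ∀ c : ℝ, 0 < c → ∀ x, f (c • x) = f x) (η : ℝ → ℝ) :
    ∫ x, separated f (dim E) η x = sphericalIntegral f * ∫ t, η t := by
  simp only [separated]
  rw [integral_mul_comp_norm hf fun r ↦ Real.exp (-(dim E * Real.log r)) * η (Real.log r),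
    ← integral_Ioi_inv_mul_comp_log]
  congr 1
  refine setIntegral_congr_fun measurableSet_Ioi fun r hr ↦ ?_
  have hr₀ : 0 < r := hr
  have hexp : Real.exp (-(dim E * Real.log r)) = (r ^ dim E)⁻¹ := by
    rw [Real.exp_neg, mul_comm, Real.exp_mul, Real.exp_log hr₀, Real.rpow_natCast]
  have hpow : r ^ dim E = r ^ (dim E - 1) * r := (pow_sub_one_mul Module.finrank_pos.ne' r).symm
  rw [hexp, hpow]
  field_simp

end Polar

end Angular

section Separated

open scoped ContDiff Laplacian Gradient RealInnerProductSpace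

variable {E : Type*} [NormedAddCommGroup E] {f g : E → ℝ} {η : ℝ → ℝ} {x : E}

local notation "dim" => Module.finrank ℝ

lemma exp_neg_add_two_mul_log_norm (s : ℝ) (hx : x ≠ 0) :
    Real.exp (-((s + 2) * Real.log ‖x‖)) = Real.exp (-(s * Real.log ‖x‖)) * (‖x‖ ^ 2)⁻¹ := by
  have hpow : Real.exp (2 * Real.log ‖x‖) = ‖x‖ ^ 2 := by
    rw [mul_comm, Real.exp_mul, Real.exp_log (norm_pos_iff.2 hx), Real.rpow_two]
  rw [add_mul, neg_add, Real.exp_add, Real.exp_neg (2 * _), hpow]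

lemma deriv_exp_neg_mul_mul (hη : Differentiable ℝ η) (s : ℝ) :
    deriv (fun t ↦ Real.exp (-(s * t)) * η t) =
      fun t ↦ Real.exp (-(s * t)) * (deriv η t - s * η t) := by
  ext t
  have hexp : HasDerivAt (fun t ↦ Real.exp (-(s * t))) (Real.exp (-(s * t)) * -s) t := by
    simpa using ((hasDerivAt_id t).const_mul s).neg.exp
  rw [(hexp.fun_mul (hη t).hasDerivAt).deriv]
  ring

lemma deriv_deriv_exp_neg_mul_mul (hη : ContDiff ℝ 2 η) (s : ℝ) :
    deriv (deriv fun t ↦ Real.exp (-(s * t)) * η t) = fun t ↦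
      Real.exp (-(s * t)) * (deriv (deriv η) t - 2 * s * deriv η t + s ^ 2 * η t) := by
  have hη₁ : Differentiable ℝ η := hη.differentiable two_ne_zero
  have hη₂ : Differentiable ℝ (deriv η) := hη.differentiable_deriv_two
  rw [deriv_exp_neg_mul_mul hη₁, deriv_exp_neg_mul_mul (hη₂.fun_sub (hη₁.const_mul s))]
  ext t
  rw [deriv_fun_sub (hη₂ t) ((hη₁ t).const_mul s), deriv_const_mul _ (hη₁ t)]
  ring

variable [InnerProductSpace ℝ E]

lemma contDiffAt_separated {k : WithTop ℕ∞} (hf : ContDiffAt ℝ k f x) (s : ℝ) (hη : ContDiff ℝ k η)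
    (hx : x ≠ 0) : ContDiffAt ℝ k (separated f s η) x :=
  hf.mul (((contDiffAt_const.mul (contDiffAt_log_norm hx)).neg.exp).mul
    (hη.contDiffAt.comp x (contDiffAt_log_norm hx)))

variable [FiniteDimensional ℝ E]

lemma inner_gradient_comp_log_norm {H : ℝ → ℝ} (hH : Differentiable ℝ H) (hx : x ≠ 0) (v : E) :
    ⟪∇ (fun y : E ↦ H (Real.log ‖y‖)) x, v⟫ =
      deriv H (Real.log ‖x‖) * (‖x‖ ^ 2)⁻¹ * ⟪x, v⟫ := by
  have hlog := (hasGradientAt_log_norm hx).hasFDerivAt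
  have hcomp : HasFDerivAt (fun y : E ↦ H (Real.log ‖y‖)) _ x :=
    (hH _).hasDerivAt.comp_hasFDerivAt x hlog
  rw [inner_gradient_left, hcomp.fderiv]
  simp [mul_assoc]

namespace IsAngular

lemma isTestFunction_separated (hf : IsAngular f) (hη : IsTestFunction (Set.Ioi 0) η) (s : ℝ) :
    IsTestFunction {0}ᶜ (separated f s η) := by
  let K : Set E := norm ⁻¹' (Real.exp '' tsupport η)
  have hexp : IsCompact (Real.exp '' tsupport η) :=
    hη.hasCompactSupport.image Real.continuous_exp
  have hKc : IsClosed K := hexp.isClosed.preimage continuous_norm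
  have hK : IsCompact K := by
    obtain ⟨R, hR⟩ := hexp.isBounded.bddAbove
    refine Metric.isCompact_of_isClosed_isBounded hKc (isBounded_iff_forall_norm_le.2 ⟨R, ?_⟩)
    exact fun x hx ↦ hR hx
  have hsub : tsupport (separated f s η) ⊆ K := by
    refine closure_minimal (fun x hx ↦ ?_) hKc
    have hlog : Real.log ‖x‖ ∈ tsupport η :=
      subset_tsupport _ fun h ↦ hx (by simp [separated, h])
    have hx₀ : x ≠ 0 := by
      rintro rfl
      simpa using hη.tsupport_subset hlog
    exact ⟨_, hlog, Real.exp_log (norm_pos_iff.2 hx₀)⟩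
  have hne : tsupport (separated f s η) ⊆ {0}ᶜ := fun x hx h ↦ by
    obtain ⟨t, -, ht⟩ := hsub hx
    rw [Set.mem_singleton_iff.1 h, norm_zero] at ht
    exact (Real.exp_pos t).ne' ht
  refine ⟨contDiff_iff_contDiffAt.2 fun x ↦ ?_, hK.of_isClosed_subset isClosed_closure hsub, hne⟩
  by_cases hx : x ∈ tsupport (separated f s η)
  · exact contDiffAt_separated (hf.contDiffAt (hne hx)) s hη.contDiff (hne hx)
  · exact contDiffAt_const.congr_of_eventuallyEq (notMem_tsupport_iff_eventuallyEq.1 hx)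

lemma laplacian_separated (hf : IsAngular f) (s : ℝ) (hη : ContDiff ℝ 2 η) (hx : x ≠ 0) :
    Δ (separated f s η) x =
      separated (shiftedLaplacian (s * (dim E - 2 - s)) f) (s + 2) η x
        + (dim E - 2 - 2 * s) * separated f (s + 2) (deriv η) x
        + separated f (s + 2) (deriv (deriv η)) x := by
  let H (t : ℝ) : ℝ := Real.exp (-(s * t)) * η t
  have hH : ContDiff ℝ 2 H := (contDiff_const.mul contDiff_id).neg.exp.mul hη
  have hradial : ContDiffAt ℝ 2 (fun y : E ↦ H (Real.log ‖y‖)) x :=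
    hH.contDiffAt.comp x (contDiffAt_log_norm hx)
  have hcross : ⟪∇ f x, ∇ (fun y : E ↦ H (Real.log ‖y‖)) x⟫ = 0 := by
    rw [real_inner_comm, inner_gradient_comp_log_norm (hH.differentiable two_ne_zero) hx,
      real_inner_comm, hf.inner_gradient_self hx, mul_zero]
  have hx' : ‖x‖ ≠ 0 := norm_ne_zero_iff.2 hx
  have hsplit : Δ (separated f s η) x =
      f x * Δ (fun y : E ↦ H (Real.log ‖y‖)) x + H (Real.log ‖x‖) * Δ f x := by
    rw [show separated f s η = fun y ↦ f y * H (Real.log ‖y‖) from rfl,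
      laplacian_mul (hf.contDiffAt_two hx) hradial, hcross]
    ring
  rw [hsplit, laplacian_comp_left hH (contDiffAt_log_norm hx), laplacian_log_norm hx,
    norm_gradient_log_norm_sq hx, deriv_deriv_exp_neg_mul_mul hη,
    deriv_exp_neg_mul_mul (hη.differentiable two_ne_zero)]
  simp only [separated, shiftedLaplacian, sphericalLaplacian, H, exp_neg_add_two_mul_log_norm s hx]
  field_simp
  ring

lemma inner_gradient_separated (hf : IsAngular f) (hg : DifferentiableAt ℝ g x)
    (hη : Differentiable ℝ η) (s : ℝ) (hx : x ≠ 0) :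
    ⟪∇ (separated g s η) x, ∇ f x⟫ = separated (fun y ↦ ⟪∇ g y, ∇ f y⟫) s η x := by
  let H (t : ℝ) : ℝ := Real.exp (-(s * t)) * η t
  have hH : Differentiable ℝ H := ((differentiable_id.const_mul s).neg.exp).mul hη
  have hradial : DifferentiableAt ℝ (fun y : E ↦ H (Real.log ‖y‖)) x :=
    (hH _).fun_comp' x ((contDiffAt_log_norm hx).differentiableAt one_ne_zero)
  have hcross : fderiv ℝ (fun y : E ↦ H (Real.log ‖y‖)) x (∇ f x) = 0 := by
    rw [← inner_gradient_left, inner_gradient_comp_log_norm hH hx, real_inner_comm,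
      hf.inner_gradient_self hx, mul_zero]
  rw [inner_gradient_left, show separated g s η = fun y ↦ g y * H (Real.log ‖y‖) from rfl,
    fderiv_fun_mul hg hradial, add_apply, smul_apply, smul_apply, hcross, ← inner_gradient_left,
    smul_zero, zero_add, smul_eq_mul, mul_comm]
  rfl

end IsAngular

section Integrals

variable [MeasurableSpace E] [BorelSpace E] [Nontrivial E]

lemma integral_congr_of_ne_zero {F G : E → ℝ} (h : ∀ x, x ≠ 0 → F x = G x) :
    ∫ x, F x = ∫ x, G x :=
  integral_congr_ae ((Measure.ae_ne volume 0).mono h)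

namespace IsAngular

lemma sphericalIntegral_mul_sphericalLaplacian (hf : IsAngular f) (hg : IsAngular g)
    (hη : IsTestFunction (Set.Ioi 0) η) :
    sphericalIntegral (fun x ↦ g x * sphericalLaplacian f x) * ∫ t, η t =
      -∫ x, separated (fun y ↦ ⟪∇ g y, ∇ f y⟫) (dim E - 2) η x := by
  have hφ := hg.isTestFunction_separated hη (dim E - 2)
  rw [← integral_separated fun c hc x ↦ (hg.mul hf.sphericalLaplacian).apply_smul hc x]
  calc
    ∫ x, separated (fun x ↦ g x * sphericalLaplacian f x) (dim E) η x
        = ∫ x, separated g (dim E - 2) η x * Δ f x := by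
      refine integral_congr_of_ne_zero fun x hx ↦ ?_
      have hexp := exp_neg_add_two_mul_log_norm (dim E - 2 : ℝ) hx
      rw [sub_add_cancel] at hexp
      have hx' : ‖x‖ ≠ 0 := norm_ne_zero_iff.2 hx
      simp only [separated, sphericalLaplacian, hexp]
      field_simp
    _ = -∫ x, ⟪∇ (separated g (dim E - 2) η) x, ∇ f x⟫ :=
      integral_mul_laplacian (hφ.contDiff.of_le (by simp)) hφ.hasCompactSupport
        fun x hx ↦ hf.contDiffAt_two (hφ.tsupport_subset hx)
    _ = _ := by
      congr 1
      exact integral_congr_of_ne_zero fun x hx ↦ hf.inner_gradient_separated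
        (hg.differentiableAt hx) (hη.contDiff.differentiable (by simp)) _ hx

lemma sphericalIntegral_mul_sphericalLaplacian_comm (hf : IsAngular f) (hg : IsAngular g) :
    sphericalIntegral (fun x ↦ g x * sphericalLaplacian f x) =
      sphericalIntegral (fun x ↦ f x * sphericalLaplacian g x) := by
  obtain ⟨η, hη, -, hpos, -⟩ := exists_isTestFunction_Ioi
  refine mul_right_cancel₀ hpos.ne' ?_
  rw [hf.sphericalIntegral_mul_sphericalLaplacian hg hη,
    hg.sphericalIntegral_mul_sphericalLaplacian hf hη]
  simp only [real_inner_comm]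

lemma sphericalIntegral_mul_sphericalLaplacian_self_nonpos (hf : IsAngular f) :
    sphericalIntegral (fun x ↦ f x * sphericalLaplacian f x) ≤ 0 := by
  obtain ⟨η, hη, hη₀, hpos, -⟩ := exists_isTestFunction_Ioi
  refine nonpos_of_mul_nonpos_left ?_ hpos
  rw [hf.sphericalIntegral_mul_sphericalLaplacian hf hη, neg_nonpos]
  exact integral_nonneg fun x ↦
    mul_nonneg real_inner_self_nonneg (mul_nonneg (Real.exp_pos _).le (hη₀ _))

end IsAngular

end Integrals

end Separated

section Moments

open scoped Laplacian

variable {E : Type*} [NormedAddCommGroup E] [InnerProductSpace ℝ E] {f g w : E → ℝ}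

lemma IsAngular.continuous_sphere (hf : IsAngular f) :
    Continuous fun θ : Metric.sphere (0 : E) 1 ↦ f θ :=
  continuous_iff_continuousAt.2 fun θ ↦
    (hf.contDiffAt (ne_zero_of_mem_unit_sphere θ)).continuousAt.comp continuousAt_subtype_val

variable [FiniteDimensional ℝ E]

lemma IsAngular.sphericalLaplacian_shiftedLaplacian (hf : IsAngular f) (a : ℝ) (x : E) :
    sphericalLaplacian (shiftedLaplacian a f) x = shiftedLaplacian a (sphericalLaplacian f) x := by
  rcases eq_or_ne x 0 with rfl | hx
  · simp [sphericalLaplacian, shiftedLaplacian]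
  have hsub := (hf.sphericalLaplacian.contDiffAt_two hx).laplacian_sub
    ((hf.const_mul a).contDiffAt_two hx)
  have hsmul := InnerProductSpace.laplacian_smul a (hf.contDiffAt_two hx)
  calc
    ‖x‖ ^ 2 * Δ (shiftedLaplacian a f) x
        = ‖x‖ ^ 2 * (Δ (sphericalLaplacian f) x
          - a * Δ f x) := congrArg _ (hsub.trans (congrArg _ hsmul))
    _ = shiftedLaplacian a (sphericalLaplacian f) x := by
      simp only [shiftedLaplacian, sphericalLaplacian]
      ring

variable [MeasurableSpace E] [BorelSpace E]

lemma sphericalIntegral_congr (h : ∀ x, ‖x‖ = 1 → f x = g x) :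
    sphericalIntegral f = sphericalIntegral g :=
  integral_congr_ae (.of_forall fun θ ↦ h θ (norm_eq_of_mem_sphere θ))

lemma sphericalIntegral_const_mul (a : ℝ) (f : E → ℝ) :
    sphericalIntegral (fun x ↦ a * f x) = a * sphericalIntegral f :=
  integral_const_mul _ _

lemma sphericalIntegral_sq_nonneg (f : E → ℝ) : 0 ≤ sphericalIntegral fun x ↦ f x * f x :=
  integral_nonneg fun _ ↦ mul_self_nonneg _

namespace IsAngular

lemma integrable_sphere (hf : IsAngular f) :
    Integrable (fun θ : Metric.sphere (0 : E) 1 ↦ f θ) (volume : Measure E).toSphere :=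
  hf.continuous_sphere.integrable_of_hasCompactSupport (.of_compactSpace _)

lemma sphericalIntegral_sub (hf : IsAngular f) (hg : IsAngular g) :
    sphericalIntegral (fun x ↦ f x - g x) = sphericalIntegral f - sphericalIntegral g :=
  integral_sub hf.integrable_sphere hg.integrable_sphere

lemma eq_zero_of_sphericalIntegral_sq_eq_zero (hf : IsAngular f)
    (h : sphericalIntegral (fun x ↦ f x * f x) = 0) {x : E} (hx : x ≠ 0) : f x = 0 := by
  refine hf.eq_zero_of_forall_norm_eq_one (fun y hy ↦ ?_) hx
  by_contra hne
  refine h.not_gt ?_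
  exact (hf.mul hf).continuous_sphere.integral_pos_of_hasCompactSupport_nonneg_nonzero
    (.of_compactSpace _) (fun _ ↦ mul_self_nonneg _)
    (x := ⟨y, mem_sphere_zero_iff_norm.2 hy⟩) (mul_self_ne_zero.2 hne)

lemma sphericalIntegral_mul_shiftedLaplacian (hf : IsAngular f) (hg : IsAngular g) (a : ℝ) :
    sphericalIntegral (fun x ↦ g x * shiftedLaplacian a f x) =
      sphericalIntegral (fun x ↦ g x * sphericalLaplacian f x)
        - a * sphericalIntegral fun x ↦ g x * f x := by
  rw [← sphericalIntegral_const_mul,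
    ← (hg.mul hf.sphericalLaplacian).sphericalIntegral_sub ((hg.mul hf).const_mul a)]
  congr 1 with x
  rw [shiftedLaplacian]
  ring

variable [Nontrivial E]

lemma sphericalIntegral_mul_shiftedLaplacian_comm (hf : IsAngular f) (hg : IsAngular g) (a : ℝ) :
    sphericalIntegral (fun x ↦ g x * shiftedLaplacian a f x) =
      sphericalIntegral (fun x ↦ f x * shiftedLaplacian a g x) := by
  rw [hf.sphericalIntegral_mul_shiftedLaplacian hg, hg.sphericalIntegral_mul_shiftedLaplacian hf,
    hf.sphericalIntegral_mul_sphericalLaplacian_comm hg]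
  simp only [mul_comm]

/-- The integrals on the right are the moments `∫ w (Δ_S)ʲ w`, `j ≤ 3`, with half of the operators
moved to the left factor, which shows that their signs alternate. -/
lemma sphericalIntegral_mul_shiftedLaplacian_three (hw : IsAngular w) (a b c : ℝ) :
    sphericalIntegral
        (fun x ↦ w x * shiftedLaplacian c (shiftedLaplacian b (shiftedLaplacian a w)) x) =
      sphericalIntegral
          (fun x ↦ sphericalLaplacian w x * sphericalLaplacian (sphericalLaplacian w) x)
        - (a + b + c) * sphericalIntegral (fun x ↦ sphericalLaplacian w x * sphericalLaplacian w x)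
        + (a * b + a * c + b * c) * sphericalIntegral (fun x ↦ w x * sphericalLaplacian w x)
        - a * b * c * sphericalIntegral fun x ↦ w x * w x := by
  have hLw := hw.sphericalLaplacian
  have hAw := hw.shiftedLaplacian a
  have hBAw := hAw.shiftedLaplacian b
  have hswap : sphericalIntegral
      (fun x ↦ sphericalLaplacian w x * sphericalLaplacian (shiftedLaplacian a w) x) =
        sphericalIntegral
          (fun x ↦ sphericalLaplacian w x * shiftedLaplacian a (sphericalLaplacian w) x) := by
    simp only [hw.sphericalLaplacian_shiftedLaplacian a]
  rw [hBAw.sphericalIntegral_mul_shiftedLaplacian hw,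
    hBAw.sphericalIntegral_mul_sphericalLaplacian_comm hw]
  simp only [mul_comm (shiftedLaplacian b _ _)]
  rw [hAw.sphericalIntegral_mul_shiftedLaplacian hLw, hswap,
    hLw.sphericalIntegral_mul_shiftedLaplacian hLw, hw.sphericalIntegral_mul_shiftedLaplacian hLw,
    hAw.sphericalIntegral_mul_shiftedLaplacian hw,
    hAw.sphericalIntegral_mul_sphericalLaplacian_comm hw]
  simp only [mul_comm (shiftedLaplacian a _ _), mul_comm (sphericalLaplacian w _) (w _)]
  rw [hw.sphericalIntegral_mul_shiftedLaplacian hLw, hw.sphericalIntegral_mul_shiftedLaplacian hw]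
  simp only [mul_comm (sphericalLaplacian w _) (w _)]
  ring

end IsAngular

end Moments

section Energy

open scoped ContDiff Laplacian Gradient RealInnerProductSpace

variable {ι : Type*}

lemma deriv_const_mul_comp_const_mul (c : ℝ) (ζ : ℝ → ℝ) (ε : ℝ) :
    (deriv fun t ↦ c * ζ (ε * t)) = fun t ↦ c * ε * deriv ζ (ε * t) := by
  ext t
  rw [deriv_const_mul_field, deriv_comp_mul_left ε ζ t, smul_eq_mul, mul_assoc]

variable {E : Type*} [NormedAddCommGroup E] [InnerProductSpace ℝ E] [FiniteDimensional ℝ E]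
  {f g w : E → ℝ} {η ζ : ℝ → ℝ} {φ : E → ℝ}

local notation "dim" => Module.finrank ℝ

lemma laplacian_sum (s : Finset ι) {φ : ι → E → ℝ} {x : E}
    (hφ : ∀ i, ContDiffAt ℝ 2 (φ i) x) :
    Δ (fun y ↦ ∑ i ∈ s, φ i y) x = ∑ i ∈ s, Δ (φ i) x := by
  classical
  induction s using Finset.induction_on with
  | empty => simp
  | insert i s hi ih =>
    simp only [Finset.sum_insert hi, ← ih]
    exact (hφ i).laplacian_add (ContDiffAt.sum fun j _ ↦ hφ j)

namespace IsTestFunction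

lemma continuous_laplacian (hφ : IsTestFunction {0}ᶜ φ) : Continuous (Δ φ) :=
  continuous_iff_continuousAt.2 fun _ ↦ (contDiffAt_laplacian hφ.contDiff.contDiffAt).continuousAt

variable [MeasurableSpace E] [BorelSpace E]

lemma integrable (hφ : IsTestFunction {0}ᶜ φ) : Integrable φ :=
  hφ.contDiff.continuous.integrable_of_hasCompactSupport hφ.hasCompactSupport

lemma integral_norm_gradient_sum_sq (s : Finset ι) {φ : ι → E → ℝ}
    (hφ : ∀ i, IsTestFunction {0}ᶜ (φ i)) :
    ∫ x, ‖∇ (fun y ↦ ∑ i ∈ s, φ i y) x‖ ^ 2 = -∑ i ∈ s, ∑ j ∈ s, ∫ x, φ i x * Δ (φ j) x := by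
  have hφ₂ (i) : ContDiff ℝ 2 (φ i) := (hφ i).contDiff.of_le ENat.LEInfty.out
  have hsum : ContDiff ℝ 2 fun y ↦ ∑ i ∈ s, φ i y := ContDiff.sum fun i _ ↦ hφ₂ i
  have hsumc : HasCompactSupport fun y ↦ ∑ i ∈ s, φ i y := by
    simpa only [Finset.sum_fn] using
      HasCompactSupport.finset_sum (f := φ) fun i _ ↦ (hφ i).hasCompactSupport
  have hint (i j) : Integrable fun x ↦ φ i x * Δ (φ j) x :=
    ((hφ i).contDiff.continuous.mul (hφ j).continuous_laplacian).integrable_of_hasCompactSupport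
      (hφ i).hasCompactSupport.mul_right
  simp only [← real_inner_self_eq_norm_sq]
  rw [← neg_eq_iff_eq_neg, ← integral_mul_laplacian (hsum.of_le one_le_two) hsumc
    fun x _ ↦ hsum.contDiffAt]
  simp only [laplacian_sum s fun i ↦ (hφ₂ i).contDiffAt, Finset.sum_mul_sum]
  rw [integral_finsetSum _ fun i _ ↦ integrable_finsetSum _ fun j _ ↦ hint i j]
  exact Finset.sum_congr rfl fun i _ ↦ integral_finsetSum _ fun j _ ↦ hint i j

end IsTestFunction

namespace IsAngular

lemma laplacian_separated_comp_const_mul (hw : IsAngular w) (s : ℝ) {h : ℝ → ℝ}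
    (hh : ContDiff ℝ 2 h) (ε : ℝ) {x : E} (hx : x ≠ 0) :
    Δ (separated w s fun t ↦ h (ε * t)) x = ∑ i : Fin 3, separated
      (![shiftedLaplacian (s * (dim E - 2 - s)) w, fun y ↦ (dim E - 2 - 2 * s) * w y, w] i)
        (s + 2) (fun t ↦ ε ^ (i : ℕ) * iteratedDeriv i h (ε * t)) x := by
  have hderiv (k : ℕ) (hk : k ≤ 2) :
      (iteratedDeriv k fun t ↦ h (ε * t)) = fun t ↦ ε ^ k * iteratedDeriv k h (ε * t) :=
    iteratedDeriv_comp_const_mul (hh.of_le (mod_cast hk)) ε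
  have hscaled : ContDiff ℝ 2 fun t ↦ h (ε * t) := hh.comp (contDiff_const.mul contDiff_id)
  rw [hw.laplacian_separated s hscaled hx, ← iteratedDeriv_one, ← iteratedDeriv_succ,
    hderiv 1 one_le_two, hderiv 2 le_rfl]
  simp [Fin.sum_univ_three, separated, mul_assoc]

variable [MeasurableSpace E] [BorelSpace E] [Nontrivial E]

-- The exponent `(dim E - 2) / 2` makes the first-order term of `laplacian_separated` vanish.
lemma integral_separated_mul_laplacian_separated (hf : IsAngular f) (hg : IsAngular g)
    (hη : IsTestFunction (Set.Ioi 0) η) (hζ : IsTestFunction (Set.Ioi 0) ζ) :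
    ∫ x, separated f ((dim E - 2) / 2) η x * Δ (separated g ((dim E - 2) / 2) ζ) x =
      sphericalIntegral (fun x ↦ f x * shiftedLaplacian (((dim E - 2) / 2) ^ 2) g x)
          * (∫ t, η t * ζ t)
        + sphericalIntegral (fun x ↦ f x * g x) * ∫ t, η t * deriv (deriv ζ) t := by
  set σ : ℝ := (dim E - 2) / 2 with hσ
  have hf_Lg := hf.mul (hg.shiftedLaplacian (σ ^ 2))
  have hfg := hf.mul hg
  have hηζ := hη.mul hζ
  have hηζ₂ := hη.mul hζ.deriv.deriv
  rw [← integral_separated fun _ hc ↦ hf_Lg.apply_smul hc,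
    ← integral_separated fun _ hc ↦ hfg.apply_smul hc,
    ← integral_add (hf_Lg.isTestFunction_separated hηζ _).integrable
      (hfg.isTestFunction_separated hηζ₂ _).integrable]
  refine integral_congr_of_ne_zero fun x hx ↦ ?_
  have hsq : σ * (dim E - 2 - σ) = σ ^ 2 := by rw [hσ]; ring
  have hdim : σ + (σ + 2) = dim E := by rw [hσ]; ring
  have hcross : (dim E : ℝ) - 2 - 2 * σ = 0 := by rw [hσ]; ring
  rw [hg.laplacian_separated σ (hζ.contDiff.of_le ENat.LEInfty.out) hx, hcross, zero_mul, add_zero,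
    mul_add, hsq, separated_mul_separated, separated_mul_separated, hdim]

lemma mul_integral_separated_mul_laplacian_separated (hf : IsAngular f) (hg : IsAngular g)
    (hη : IsTestFunction (Set.Ioi 0) η) (hζ : IsTestFunction (Set.Ioi 0) ζ) {ε : ℝ} (hε : 0 < ε)
    (c d : ℝ) :
    ε * ∫ x, separated f ((dim E - 2) / 2) (fun t ↦ c * η (ε * t)) x
        * Δ (separated g ((dim E - 2) / 2) fun t ↦ d * ζ (ε * t)) x =
      c * d * (sphericalIntegral (fun x ↦ f x * shiftedLaplacian (((dim E - 2) / 2) ^ 2) g x)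
          * (∫ t, η t * ζ t)
        + ε ^ 2 * (sphericalIntegral (fun x ↦ f x * g x) * ∫ t, η t * deriv (deriv ζ) t)) := by
  have hrescale (ξ : ℝ → ℝ) (b : ℝ) :
      ∫ t, c * η (ε * t) * (b * ξ (ε * t)) = c * b * (ε⁻¹ * ∫ t, η t * ξ t) := by
    rw [← abs_of_pos (inv_pos.2 hε), ← smul_eq_mul |ε⁻¹|,
      ← Measure.integral_comp_mul_left (fun t ↦ η t * ξ t), ← integral_const_mul]
    congr 1 with t
    ring
  rw [hf.integral_separated_mul_laplacian_separated hg ((hη.comp_const_mul hε).const_mul c)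
    ((hζ.comp_const_mul hε).const_mul d), hrescale, deriv_const_mul_comp_const_mul,
    deriv_const_mul_comp_const_mul, hrescale]
  field_simp

lemma tendsto_mul_integral_norm_gradient_sq {N : ℕ} {a : Fin (N + 1) → E → ℝ}
    {η : Fin (N + 1) → ℝ → ℝ} (ha : ∀ i, IsAngular (a i))
    (hη : ∀ i, IsTestFunction (Set.Ioi 0) (η i)) :
    Tendsto
      (fun ε : ℝ ↦ ε * ∫ x, ‖∇ (fun y ↦ ∑ i,
        separated (a i) ((dim E - 2) / 2) (fun t ↦ ε ^ (i : ℕ) * η i (ε * t)) y) x‖ ^ 2)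
      (nhdsWithin 0 (Set.Ioi 0))
      (nhds (-(sphericalIntegral (fun x ↦ a 0 x * shiftedLaplacian (((dim E - 2) / 2) ^ 2) (a 0) x)
        * ∫ t, η 0 t * η 0 t))) := by
  let A (i j : Fin (N + 1)) : ℝ :=
    sphericalIntegral (fun x ↦ a i x * shiftedLaplacian (((dim E - 2) / 2) ^ 2) (a j) x)
      * ∫ t, η i t * η j t
  let B (i j : Fin (N + 1)) : ℝ :=
    sphericalIntegral (fun x ↦ a i x * a j x) * ∫ t, η i t * deriv (deriv (η j)) t
  let P (ε : ℝ) : ℝ :=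
    -∑ i : Fin (N + 1), ∑ j : Fin (N + 1), ε ^ (i : ℕ) * ε ^ (j : ℕ) * (A i j + ε ^ 2 * B i j)
  have hP : Continuous P := by fun_prop
  have hP₀ : P 0 = -A 0 0 := by simp [P, Fin.sum_univ_succ]
  refine hP₀ ▸ ((hP.tendsto 0).mono_left nhdsWithin_le_nhds).congr' ?_
  filter_upwards [self_mem_nhdsWithin] with ε hε
  rw [IsTestFunction.integral_norm_gradient_sum_sq _ fun i ↦ (ha i).isTestFunction_separated
    (((hη i).comp_const_mul hε).const_mul _) _, mul_neg, Finset.mul_sum]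
  simp only [Finset.mul_sum, P, A, B,
    fun i j ↦ (ha i).mul_integral_separated_mul_laplacian_separated (ha j) (hη i) (hη j) hε]

lemma mul_integral_separated_mul_separated_sq {V : E → ℝ} (hw : IsAngular w)
    (hV : ∀ c : ℝ, 0 < c → ∀ x, V (c • x) = V x) {k s : ℝ} (hks : k + (s + s) = dim E) (h : ℝ → ℝ)
    {ε : ℝ} (hε : 0 < ε) :
    ε * ∫ x, separated V k 1 x * separated w s (fun t ↦ h (ε * t)) x ^ 2 =
      sphericalIntegral (fun x ↦ V x * w x ^ 2) * ∫ t, h t ^ 2 := by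
  have hVw (c : ℝ) (hc : 0 < c) (x : E) : V (c • x) * (w (c • x) * w (c • x)) =
      V x * (w x * w x) := by
    rw [hV c hc, hw.apply_smul hc]
  simp only [sq, separated_mul_separated, hks, Pi.one_apply, one_mul]
  rw [integral_separated hVw, Measure.integral_comp_mul_left (fun t ↦ h t * h t),
    abs_of_pos (inv_pos.2 hε), smul_eq_mul]
  field_simp

/-- Testing stability on `w r ^ (-(n - 6) / 2) h(ε log r)`, whose energy per logarithmic length
tends, as `ε → 0`, to the quadratic form of a cubic polynomial in `Δ_S`. -/
lemma sphericalIntegral_mul_sq_le_of_stable {V : E → ℝ} (hw : IsAngular w)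
    (hV : ∀ c : ℝ, 0 < c → ∀ x, V (c • x) = V x)
    (hstab : ∀ φ : E → ℝ, IsTestFunction {0}ᶜ φ →
      ∫ x, separated V 6 1 x * φ x ^ 2 ≤ ∫ x, ‖∇ (Δ φ) x‖ ^ 2) :
    sphericalIntegral (fun x ↦ V x * w x ^ 2) ≤
      -sphericalIntegral fun x ↦ w x *
        shiftedLaplacian ((dim E - 6) * (dim E + 2) / 4) (shiftedLaplacian (((dim E - 2) / 2) ^ 2)
          (shiftedLaplacian ((dim E - 6) * (dim E + 2) / 4) w)) x := by
  obtain ⟨h, hh, -, -, hpos⟩ := exists_isTestFunction_Ioi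
  set s : ℝ := (dim E - 6) / 2 with hs
  have hb : s * (dim E - 2 - s) = (dim E - 6) * (dim E + 2) / 4 := by rw [hs]; ring
  have hσ : s + 2 = (dim E - 2) / 2 := by rw [hs]; ring
  have hks : 6 + (s + s) = dim E := by rw [hs]; ring
  set b : ℝ := (dim E - 6) * (dim E + 2) / 4
  let a : Fin 3 → E → ℝ := ![shiftedLaplacian b w, fun y ↦ (dim E - 2 - 2 * s) * w y, w]
  have ha (i) : IsAngular (a i) := by
    fin_cases i
    exacts [hw.shiftedLaplacian b, hw.const_mul _, hw]
  have henergy := tendsto_mul_integral_norm_gradient_sq ha fun i ↦ hh.iteratedDeriv i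
  have hstable : ∀ᶠ ε in nhdsWithin (0 : ℝ) (Set.Ioi 0),
      sphericalIntegral (fun x ↦ V x * w x ^ 2) * (∫ t, h t ^ 2) ≤
        ε * ∫ x, ‖∇ (fun y ↦ ∑ i, separated (a i) ((dim E - 2) / 2)
          (fun t ↦ ε ^ (i : ℕ) * iteratedDeriv i h (ε * t)) y) x‖ ^ 2 := by
    filter_upwards [self_mem_nhdsWithin] with ε hε
    rw [← hw.mul_integral_separated_mul_separated_sq hV hks h hε]
    refine mul_le_mul_of_nonneg_left ((hstab _ (hw.isTestFunction_separated
      (hh.comp_const_mul hε) s)).trans_eq ?_) (le_of_lt hε)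
    refine integral_congr_of_ne_zero fun x hx ↦ ?_
    congr 2
    refine EventuallyEq.gradient_eq ?_
    filter_upwards [isOpen_ne.mem_nhds hx] with y hy
    rw [hw.laplacian_separated_comp_const_mul s (hh.contDiff.of_le ENat.LEInfty.out) ε hy, hb, hσ]
  have hlim := ge_of_tendsto henergy hstable
  refine le_of_mul_le_mul_right (hlim.trans_eq ?_) hpos
  rw [((hw.shiftedLaplacian b).shiftedLaplacian _).sphericalIntegral_mul_shiftedLaplacian_comm hw]
  simp [a, mul_comm, sq]

end IsAngular

end Energy

section HomogeneousSolutions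

open scoped ContDiff Laplacian Gradient

variable {E : Type*} [NormedAddCommGroup E] {u w : E → ℝ} {s : ℝ} {x : E}

lemma abs_separated_one_rpow (w : E → ℝ) (s q : ℝ) (x : E) :
    |separated w s 1 x| ^ q = separated (fun y ↦ |w y| ^ q) (s * q) 1 x := by
  simp only [separated, Pi.one_apply, mul_one, abs_mul, Real.abs_exp]
  rw [Real.mul_rpow (abs_nonneg _) (Real.exp_nonneg _), ← Real.exp_mul]
  ring_nf

lemma separated_one_of_norm_eq_one (w : E → ℝ) (s : ℝ) (hx : ‖x‖ = 1) :
    separated w s 1 x = w x := by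
  simp [separated, hx]

variable [InnerProductSpace ℝ E]

local notation "dim" => Module.finrank ℝ

lemma isAngular_comp_normalize (hu : ContDiffOn ℝ ∞ u {0}ᶜ) :
    IsAngular fun x ↦ u (‖x‖⁻¹ • x) where
  contDiffAt x hx := by
    have hx' : ‖x‖⁻¹ • x ≠ 0 := smul_ne_zero (inv_ne_zero (norm_ne_zero_iff.2 hx)) hx
    have hnormalize : ContDiffAt ℝ ∞ (fun x : E ↦ ‖x‖⁻¹ • x) x :=
      ((contDiffAt_norm ℝ hx).inv (norm_ne_zero_iff.2 hx)).smul contDiffAt_id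
    exact ContDiffAt.fun_comp (g := u) x
      (hu.contDiffAt (isOpen_compl_singleton.mem_nhds hx')) hnormalize
  apply_smul c hc x := by
    rw [norm_smul, Real.norm_of_nonneg hc.le, smul_smul, mul_inv, mul_right_comm,
      inv_mul_cancel₀ hc.ne', one_mul]

lemma eq_separated_of_homogeneous (hu : ∀ x, x ≠ 0 → u x = ‖x‖ ^ (-s) * u (‖x‖⁻¹ • x))
    (hx : x ≠ 0) : u x = separated (fun y ↦ u (‖y‖⁻¹ • y)) s 1 x := by
  rw [hu x hx, Real.rpow_def_of_pos (norm_pos_iff.2 hx), separated, Pi.one_apply, mul_one,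
    mul_comm, mul_neg, mul_comm s]

variable [FiniteDimensional ℝ E]

namespace IsAngular

lemma laplacian_eq_separated (hw : IsAngular w) (hu : ∀ x, x ≠ 0 → u x = separated w s 1 x)
    (hx : x ≠ 0) : Δ u x = separated (shiftedLaplacian (s * (dim E - 2 - s)) w) (s + 2) 1 x := by
  have hΔ : Δ u x = Δ (separated w s 1) x := by
    refine InnerProductSpace.laplacian_congr_nhds ?_ |>.eq_of_nhds
    filter_upwards [isOpen_ne.mem_nhds hx] with y hy using hu y hy
  rw [hΔ, hw.laplacian_separated s (η := 1) contDiff_const hx]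
  simp [separated]

lemma laplacian_laplacian_laplacian_eq_separated (hw : IsAngular w)
    (hu : ∀ x, x ≠ 0 → u x = separated w s 1 x) (hx : x ≠ 0) :
    Δ (Δ (Δ u)) x = separated (shiftedLaplacian ((s + 4) * (dim E - 2 - (s + 4)))
      (shiftedLaplacian ((s + 2) * (dim E - 2 - (s + 2)))
        (shiftedLaplacian (s * (dim E - 2 - s)) w))) (s + 6) 1 x := by
  rw [((hw.shiftedLaplacian _).shiftedLaplacian _).laplacian_eq_separated (fun y hy ↦
    (hw.shiftedLaplacian _).laplacian_eq_separated (fun z hz ↦ hw.laplacian_eq_separated hu hz) hy)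
    hx]
  ring_nf

lemma shiftedLaplacian_three_of_triharmonic (hw : IsAngular w)
    (hu : ∀ x, x ≠ 0 → u x = separated w s 1 x) {q : ℝ}
    (heq : ∀ x, x ≠ 0 → Δ (Δ (Δ u)) x = -(|u x| ^ q * u x)) (hx : ‖x‖ = 1) :
    shiftedLaplacian ((s + 4) * (dim E - 2 - (s + 4)))
      (shiftedLaplacian ((s + 2) * (dim E - 2 - (s + 2)))
        (shiftedLaplacian (s * (dim E - 2 - s)) w)) x = -(|w x| ^ q * w x) := by
  have hx₀ : x ≠ 0 := norm_ne_zero_iff.1 (hx ▸ one_ne_zero)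
  have h := heq x hx₀
  rwa [hw.laplacian_laplacian_laplacian_eq_separated hu hx₀, hu x hx₀,
    separated_one_of_norm_eq_one _ _ hx, separated_one_of_norm_eq_one _ _ hx] at h

variable [MeasurableSpace E] [BorelSpace E] [Nontrivial E]

lemma sphericalIntegral_rpow_mul_sq_le_of_stable (hw : IsAngular w)
    (hu : ∀ x, x ≠ 0 → u x = separated w s 1 x) {p q : ℝ} (hsq : s * q = 6)
    (hstab : ∀ φ : E → ℝ, IsTestFunction {0}ᶜ φ →
      p * ∫ x, |u x| ^ q * φ x ^ 2 ≤ ∫ x, ‖∇ (Δ φ) x‖ ^ 2) :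
    p * sphericalIntegral (fun x ↦ |w x| ^ q * w x ^ 2) ≤
      -sphericalIntegral fun x ↦ w x *
        shiftedLaplacian ((dim E - 6) * (dim E + 2) / 4) (shiftedLaplacian (((dim E - 2) / 2) ^ 2)
          (shiftedLaplacian ((dim E - 6) * (dim E + 2) / 4) w)) x := by
  have hV (c : ℝ) (hc : 0 < c) (x : E) : p * |w (c • x)| ^ q = p * |w x| ^ q := by
    rw [hw.apply_smul hc]
  rw [← sphericalIntegral_const_mul]
  simp only [← mul_assoc]
  refine hw.sphericalIntegral_mul_sq_le_of_stable hV fun φ hφ ↦ ?_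
  refine le_of_eq_of_le ?_ (hstab φ hφ)
  rw [← integral_const_mul]
  refine integral_congr_of_ne_zero fun x hx ↦ ?_
  rw [hu x hx, abs_separated_one_rpow, hsq]
  simp only [separated]
  ring

/-- The equation and the stability inequality both express `∫ |w| ^ (p - 1) w ^ 2` through the
moments of `w`; comparing the two coefficient by coefficient leaves no room for `w ≠ 0`. -/
lemma eq_zero_of_coefficients_lt (hw : IsAngular w) {W : E → ℝ} {p a₀ a₁ a₂ b₀ b₁ b₂ : ℝ}
    (hp : 1 ≤ p)
    (heq : ∀ x, ‖x‖ = 1 → shiftedLaplacian a₂ (shiftedLaplacian a₁ (shiftedLaplacian a₀ w)) x =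
      -(W x * w x))
    (hstab : p * sphericalIntegral (fun x ↦ W x * w x ^ 2) ≤ -sphericalIntegral fun x ↦
      w x * shiftedLaplacian b₂ (shiftedLaplacian b₁ (shiftedLaplacian b₀ w)) x)
    (h₁ : b₀ + b₁ + b₂ ≤ p * (a₀ + a₁ + a₂))
    (h₂ : b₀ * b₁ + b₀ * b₂ + b₁ * b₂ ≤ p * (a₀ * a₁ + a₀ * a₂ + a₁ * a₂))
    (h₃ : b₀ * b₁ * b₂ < p * (a₀ * a₁ * a₂)) (hx : x ≠ 0) : w x = 0 := by
  have hQ : sphericalIntegral (fun x ↦ W x * w x ^ 2) = -sphericalIntegral fun x ↦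
      w x * shiftedLaplacian a₂ (shiftedLaplacian a₁ (shiftedLaplacian a₀ w)) x := by
    rw [← neg_one_mul (sphericalIntegral _), ← sphericalIntegral_const_mul]
    refine sphericalIntegral_congr fun x hx ↦ ?_
    rw [heq x hx]
    ring
  rw [hQ, hw.sphericalIntegral_mul_shiftedLaplacian_three,
    hw.sphericalIntegral_mul_shiftedLaplacian_three] at hstab
  have hmoment₀ := sphericalIntegral_sq_nonneg w
  have hmoment₁ := hw.sphericalIntegral_mul_sphericalLaplacian_self_nonpos
  have hmoment₂ := sphericalIntegral_sq_nonneg (sphericalLaplacian w)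
  have hmoment₃ := hw.sphericalLaplacian.sphericalIntegral_mul_sphericalLaplacian_self_nonpos
  refine hw.eq_zero_of_sphericalIntegral_sq_eq_zero (hmoment₀.antisymm' ?_) hx
  refine nonpos_of_mul_nonpos_right (a := p * (a₀ * a₁ * a₂) - b₀ * b₁ * b₂) ?_ (sub_pos.2 h₃)
  linarith [mul_nonneg (sub_nonneg.2 h₂) (neg_nonneg.2 hmoment₁),
    mul_nonneg (sub_nonneg.2 h₁) hmoment₂, mul_nonneg (sub_nonneg.2 hp) (neg_nonneg.2 hmoment₃)]

end IsAngular

end HomogeneousSolutions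

section JosephLundgren

/-- The optimal constant `C` in the Hardy–Rellich inequality `∫ ‖∇ Δ φ‖² ≥ C ∫ φ² / ‖x‖⁶` in
dimension `n`. -/
def hardyRellichConst (n : ℝ) : ℝ := ((n - 6) * (n + 2) * (n - 2) / 8) ^ 2

/-- The cubic in `t = (k + 4) * (n - 4 - k)` whose comparison with `hardyRellichConst n` decides the
stability of the singular solution `c ‖x‖ ^ (-k)` with `k = 6 / (p - 1)`. -/
def josephLundgrenCubic (n t : ℝ) : ℝ := t * (t + 4 - 2 * n) * (t + 4 + 2 * n)

lemma josephLundgrenCubic_lt {n t₀ t : ℝ} (ht₀ : 0 < t₀) (hpos : 0 < josephLundgrenCubic n t₀)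
    (h : t₀ < t) : josephLundgrenCubic n t₀ < josephLundgrenCubic n t := by
  have hfactor : 0 < (t₀ + 4 - 2 * n) * (t₀ + 4 + 2 * n) :=
    pos_of_mul_pos_right (by simpa only [josephLundgrenCubic, mul_assoc] using hpos) ht₀.le
  simp only [josephLundgrenCubic, mul_assoc]
  exact mul_lt_mul h (by nlinarith) hfactor (ht₀.trans h).le

lemma hardyRellichConst_pos {n : ℝ} (hn : 6 < n) : 0 < hardyRellichConst n := by
  have hprod : 0 < (n - 6) * (n + 2) * (n - 2) :=
    mul_pos (mul_pos (by linarith) (by linarith)) (by linarith)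
  exact pow_pos (div_pos hprod (by norm_num)) 2

lemma mul_prod_eq_josephLundgrenCubic {p k : ℝ} (hk : k * (p - 1) = 6) (n : ℝ) :
    p * (k * (n - 2 - k) * ((k + 2) * (n - 2 - (k + 2))) * ((k + 4) * (n - 2 - (k + 4)))) =
      josephLundgrenCubic n ((k + 4) * (n - 4 - k)) := by
  rw [josephLundgrenCubic]
  linear_combination
    (n - 2 - k) * ((k + 2) * (n - 2 - (k + 2))) * ((k + 4) * (n - 2 - (k + 4))) * hk

lemma dd1_neg {n : ℝ} (hn : 15 ≤ n) : dd1 n < 0 := by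
  obtain ⟨m, hm, rfl⟩ : ∃ m, 0 ≤ m ∧ n = 15 + m := ⟨n - 15, sub_nonneg.2 hn, by ring⟩
  rw [← neg_pos, dd1]
  ring_nf
  positivity

lemma dd2_pos {n : ℝ} (hn : 15 ≤ n) : 0 < dd2 n := by
  obtain ⟨m, hm, rfl⟩ : ∃ m, 0 ≤ m ∧ n = 15 + m := ⟨n - 15, sub_nonneg.2 hn, by ring⟩
  rw [dd2]
  ring_nf
  positivity

lemma dd1_sq_sub_dd2 (n : ℝ) : dd1 n ^ 2 - 1296 * dd2 n = 512 * (96 * n ^ 2 + 128) ^ 3 := by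
  rw [dd1, dd2]
  ring

lemma dd0_radicand_pos {n : ℝ} (hn : 15 ≤ n) : 0 < -(dd1 n + 36 * √(dd2 n)) := by
  have hsq := Real.sq_sqrt (dd2_pos hn).le
  have hlt : (36 * √(dd2 n)) ^ 2 < dd1 n ^ 2 := by
    have hpos : 0 < 512 * (96 * n ^ 2 + 128) ^ 3 := by positivity
    linarith [dd1_sq_sub_dd2 n]
  linarith [lt_of_pow_lt_pow_left₀ 2 (neg_nonneg.2 (dd1_neg hn).le) (neg_sq (dd1 n) ▸ hlt)]

lemma dd0_pos {n : ℝ} (hn : 15 ≤ n) : 0 < dd0 n :=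
  Real.rpow_pos_of_pos (dd0_radicand_pos hn) _

lemma dd0_pow_three {n : ℝ} (hn : 15 ≤ n) : dd0 n ^ 3 = -(dd1 n + 36 * √(dd2 n)) := by
  rw [dd0, one_div]
  exact Real.rpow_inv_natCast_pow (dd0_radicand_pos hn).le three_ne_zero

lemma cardano_add_pow_three {n : ℝ} (hn : 15 ≤ n) :
    (dd0 n / 24) ^ 3 + ((96 * n ^ 2 + 128) / (3 * dd0 n)) ^ 3 = -2 * dd1 n / 13824 := by
  have hd := dd0_pos hn
  have hconj : ((96 * n ^ 2 + 128) / (3 * dd0 n)) ^ 3 = -(dd1 n - 36 * √(dd2 n)) / 13824 := by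
    rw [div_pow, mul_pow, div_eq_div_iff (by positivity) (by norm_num), dd0_pow_three hn]
    linear_combination 27 * 1296 * Real.sq_sqrt (dd2_pos hn).le - 27 * dd1_sq_sub_dd2 n
  rw [hconj, div_pow, dd0_pow_three hn]
  ring

/-- Cardano's formula: the substitution `t = A + B - 8 / 3` removes the quadratic term of
`josephLundgrenCubic n t - hardyRellichConst n`, and `dd0` is chosen so that `A = dd0 n / 24`. -/
lemma josephLundgrenCubic_sq_sub_dfn_sq {n : ℝ} (hn : 15 ≤ n) (hdfn : 0 < dfn n) :
    0 < n ^ 2 / 4 - dfn n ^ 2 ∧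
      josephLundgrenCubic n (n ^ 2 / 4 - dfn n ^ 2) = hardyRellichConst n := by
  have hd := dd0_pos hn
  have hcubes := cardano_add_pow_three hn
  have hsqrt := pos_of_mul_pos_right hdfn (by norm_num : (0 : ℝ) ≤ 1 / 6)
  have ht : n ^ 2 / 4 - dfn n ^ 2 = dd0 n / 24 + (96 * n ^ 2 + 128) / (3 * dd0 n) - 8 / 3 := by
    rw [dfn, mul_pow, Real.sq_sqrt (Real.sqrt_pos.1 hsqrt).le]
    field_simp
    ring
  set A := dd0 n / 24 with hA
  set B := (96 * n ^ 2 + 128) / (3 * dd0 n) with hB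
  have hAB : A * B = (12 * n ^ 2 + 16) / 9 := by
    rw [hA, hB]
    field_simp
    ring
  have hA₀ : 0 < A := by positivity
  have hB₀ : 0 < B := by positivity
  rw [ht]
  constructor
  · nlinarith [sq_nonneg (A - B)]
  · rw [dd1] at hcubes
    rw [josephLundgrenCubic, hardyRellichConst]
    linear_combination hcubes + 3 * (A + B) * hAB

lemma lt_dfn_of_lt_pc {n p k : ℝ} (hp : 1 < p) (hk : k * (p - 1) = 6) (hpc : p < pc n) :
    n / 2 - 4 - k < dfn n := by
  by_contra! hle
  have hk₀ : 0 < k := pos_of_mul_pos_left (by rw [hk]; norm_num) (sub_pos.2 hp).le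
  have hden : 2 * k ≤ n - 8 - 2 * dfn n := by linarith
  rw [pc, lt_div_iff₀ (by linarith)] at hpc
  linarith [mul_le_mul_of_nonneg_left hden (sub_pos.2 hp).le]

lemma hardyRellichConst_lt_josephLundgrenCubic {n : ℕ} (hn : 7 ≤ n) {p k : ℝ} (hp : 1 < p)
    (hk : k * (p - 1) = 6) (hk₀ : 0 < k) (hkn : k < (n - 6) / 2) (hpc : 15 ≤ n → p < pc n) :
    hardyRellichConst n < josephLundgrenCubic n ((k + 4) * (n - 4 - k)) := by
  have hn₇ : (7 : ℝ) ≤ n := mod_cast hn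
  have hpos := hardyRellichConst_pos (n := n) (by linarith)
  set d : ℝ := n / 2 - 4 - k with hd
  have ht : (k + 4) * (n - 4 - k) = (n : ℝ) ^ 2 / 4 - d ^ 2 := by rw [hd]; ring
  suffices ∃ t₀, 0 < t₀ ∧ t₀ < (n : ℝ) ^ 2 / 4 - d ^ 2 ∧
      hardyRellichConst n ≤ josephLundgrenCubic n t₀ by
    obtain ⟨t₀, ht₀, hlt, hle⟩ := this
    exact ht ▸ hle.trans_lt (josephLundgrenCubic_lt ht₀ (hpos.trans_le hle) hlt)
  rcases lt_or_ge d 1 with hd₁ | hd₁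
  · refine ⟨n ^ 2 / 4 - 1, by nlinarith, by nlinarith, ?_⟩
    have hgap : 0 < ((n : ℝ) - 6) * (n + 2) ^ 2 * (n - 2) ^ 2 * (12 / 64) := by
      have h₆ : 0 < (n : ℝ) - 6 := by linarith
      have h₂ : 0 < (n : ℝ) - 2 := by linarith
      positivity
    rw [josephLundgrenCubic, hardyRellichConst]
    linarith
  · rcases lt_or_ge n 15 with hn₁₅ | hn₁₅
    · refine ⟨4 * n - 16, by linarith, by nlinarith, ?_⟩
      rw [josephLundgrenCubic, hardyRellichConst]
      interval_cases n <;> norm_num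
    · have hdfn : d < dfn n := lt_dfn_of_lt_pc hp hk (hpc hn₁₅)
      obtain ⟨ht₀, heq⟩ := josephLundgrenCubic_sq_sub_dfn_sq (mod_cast hn₁₅ : (15 : ℝ) ≤ n)
        (by linarith)
      exact ⟨_, ht₀, by gcongr, heq.ge⟩

lemma coefficients_le_of_prod_le {p a₀ a₁ a₂ b c : ℝ} (hp : 0 ≤ p) (ha₀ : 0 < a₀) (ha₁ : 0 < a₁)
    (ha₂ : 0 < a₂) (hb : 0 < b) (hc : 0 < c) (ha₀₂ : a₀ + a₂ ≤ 2 * b) (hac : a₁ ≤ c)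
    (h : b * c * b ≤ p * (a₀ * a₁ * a₂)) :
    b + c + b ≤ p * (a₀ + a₁ + a₂) ∧
      b * c + b * b + c * b ≤ p * (a₀ * a₁ + a₀ * a₂ + a₁ * a₂) := by
  have hamgm : 2 * (a₀ * a₂) ≤ b * (a₀ + a₂) := by
    nlinarith [sq_nonneg (a₀ - a₂), mul_le_mul_of_nonneg_right ha₀₂ (add_pos ha₀ ha₂).le]
  have hprod : a₀ * a₂ ≤ b * b := by nlinarith
  have hbb : b * b ≤ p * (a₀ * a₂) := by
    refine le_of_mul_le_mul_right ?_ hc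
    nlinarith [mul_le_mul_of_nonneg_left hac (mul_nonneg hp (mul_pos ha₀ ha₂).le)]
  have hc₁ : c ≤ p * a₁ := by
    refine le_of_mul_le_mul_left ?_ (mul_pos hb hb)
    nlinarith [mul_le_mul_of_nonneg_left hprod (mul_nonneg hp ha₁.le)]
  have hb₁ : 2 * b ≤ p * (a₀ + a₂) := by
    refine le_of_mul_le_mul_left ?_ hb
    nlinarith [mul_le_mul_of_nonneg_left hamgm hp]
  have hbc : 2 * (b * c) ≤ p * (a₁ * (a₀ + a₂)) := by
    refine le_of_mul_le_mul_left ?_ hb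
    nlinarith [mul_le_mul_of_nonneg_left hamgm (mul_nonneg hp ha₁.le)]
  constructor <;> linarith

end JosephLundgren

section Liouville

open scoped Laplacian Gradient

variable {E : Type*} [NormedAddCommGroup E] [InnerProductSpace ℝ E] [FiniteDimensional ℝ E]
  [MeasurableSpace E] [BorelSpace E] [Nontrivial E] {u w : E → ℝ} {x : E}

local notation "dim" => Module.finrank ℝ

lemma IsAngular.eq_zero_of_hardyRellichConst_lt (hw : IsAngular w) {p k : ℝ} (hp : 1 < p)
    (hk : k * (p - 1) = 6) (hk₀ : 0 < k) (hkn : k < (dim E - 6) / 2)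
    (hu : ∀ x, x ≠ 0 → u x = separated w k 1 x)
    (heq : ∀ x, x ≠ 0 → Δ (Δ (Δ u)) x = -(|u x| ^ (p - 1) * u x))
    (hstab : ∀ φ : E → ℝ, IsTestFunction {0}ᶜ φ →
      p * ∫ x, |u x| ^ (p - 1) * φ x ^ 2 ≤ ∫ x, ‖∇ (Δ φ) x‖ ^ 2)
    (hlt : hardyRellichConst (dim E) < josephLundgrenCubic (dim E) ((k + 4) * (dim E - 4 - k)))
    (hx : x ≠ 0) : w x = 0 := by
  set n := (dim E : ℝ)
  have ha₀ : 0 < k * (n - 2 - k) := mul_pos hk₀ (by linarith)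
  have ha₁ : 0 < (k + 2) * (n - 2 - (k + 2)) := mul_pos (by linarith) (by linarith)
  have ha₂ : 0 < (k + 4) * (n - 2 - (k + 4)) := mul_pos (by linarith) (by linarith)
  have hb : 0 < (n - 6) * (n + 2) / 4 := div_pos (mul_pos (by linarith) (by linarith)) four_pos
  have hc : 0 < ((n - 2) / 2) ^ 2 := pow_pos (by linarith) 2
  have hprod : (n - 6) * (n + 2) / 4 * ((n - 2) / 2) ^ 2 * ((n - 6) * (n + 2) / 4) <
      p * (k * (n - 2 - k) * ((k + 2) * (n - 2 - (k + 2))) * ((k + 4) * (n - 2 - (k + 4)))) := by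
    rw [mul_prod_eq_josephLundgrenCubic hk]
    refine lt_of_eq_of_lt ?_ hlt
    rw [hardyRellichConst]
    ring
  obtain ⟨h₁, h₂⟩ := coefficients_le_of_prod_le (zero_le_one.trans hp.le) ha₀ ha₁ ha₂ hb hc
    (by linarith [sq_nonneg (n / 2 - 3 - k)]) (by linarith [sq_nonneg (n / 2 - 3 - k)]) hprod.le
  exact hw.eq_zero_of_coefficients_lt hp.le
    (fun x hx ↦ hw.shiftedLaplacian_three_of_triharmonic hu heq hx)
    (hw.sphericalIntegral_rpow_mul_sq_le_of_stable hu hk hstab) h₁ h₂ hprod hx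

lemma laplacian_eq_innerProductSpace_laplacian {n : ℕ} (u : EuclideanSpace ℝ (Fin n) → ℝ) :
    laplacian u = Δ u := by
  ext x
  rw [InnerProductSpace.laplacian_eq_iteratedFDeriv_orthonormalBasis u
    (EuclideanSpace.basisFun (Fin n) ℝ)]
  simp only [laplacian, EuclideanSpace.basisFun_apply]

lemma singular_exponent_bounds {n p : ℝ} (hn : 6 < n) (hp : (n + 6) / (n - 6) < p) :
    1 < p ∧ 0 < 6 / (p - 1) ∧ 6 / (p - 1) < (n - 6) / 2 := by
  rw [div_lt_iff₀ (sub_pos.2 hn)] at hp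
  have hp₁ : 1 < p := by
    by_contra! hle
    linarith [mul_le_mul_of_nonneg_right hle (sub_pos.2 hn).le]
  have hp₀ : 0 < p - 1 := sub_pos.2 hp₁
  refine ⟨hp₁, by positivity, ?_⟩
  rw [div_lt_iff₀ hp₀]
  linarith

end Liouville

/-- **Theorem 4.1.** Let `n ≥ 7` and let `u` be a smooth homogeneous solution of
`(-Δ)³ u = |u|^{p-1} u` on `ℝⁿ \ {0}` (i.e. `u(x) = |x|^{-6/(p-1)} u(x/|x|)` for `x ≠ 0`)
which is stable in `ℝⁿ \ {0}`. If `(n+6)/(n-6) < p` and, in case `n ≥ 15`, additionally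
`p < p_c(n)`, then `u ≡ 0` on `ℝⁿ \ {0}`. -/
theorem triharmonic_homogeneous_stable_liouville (n : ℕ) (hn : 7 ≤ n) (p : ℝ)
    (hp1 : ((n : ℝ) + 6) / ((n : ℝ) - 6) < p) (hpc : 15 ≤ n → p < pc n)
    (u : EuclideanSpace ℝ (Fin n) → ℝ)
    (hu : ContDiffOn ℝ (⊤ : ℕ∞) u {(0 : EuclideanSpace ℝ (Fin n))}ᶜ)
    (heq : ∀ x : EuclideanSpace ℝ (Fin n), x ≠ 0 →
      laplacian (laplacian (laplacian u)) x = -(|u x| ^ (p - 1) * u x))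
    (hhom : ∀ x : EuclideanSpace ℝ (Fin n), x ≠ 0 →
      u x = ‖x‖ ^ (-(6 / (p - 1))) * u (‖x‖⁻¹ • x))
    (hstab : ∀ φ : EuclideanSpace ℝ (Fin n) → ℝ, ContDiff ℝ (⊤ : ℕ∞) φ →
      HasCompactSupport φ → tsupport φ ⊆ {(0 : EuclideanSpace ℝ (Fin n))}ᶜ →
      p * (∫ x, |u x| ^ (p - 1) * φ x ^ 2) ≤ ∫ x, ‖gradient (laplacian φ) x‖ ^ 2) :
    ∀ x : EuclideanSpace ℝ (Fin n), x ≠ 0 → u x = 0 := by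
  have : Nontrivial (EuclideanSpace ℝ (Fin n)) :=
    Module.nontrivial_of_finrank_pos (R := ℝ) (by rw [finrank_euclideanSpace_fin]; omega)
  obtain ⟨hp, hk₀, hkn⟩ := singular_exponent_bounds (mod_cast hn) hp1
  have hk : 6 / (p - 1) * (p - 1) = 6 := div_mul_cancel₀ 6 (sub_pos.2 hp).ne'
  have hlt := hardyRellichConst_lt_josephLundgrenCubic hn hp hk hk₀ hkn hpc
  have hw := isAngular_comp_normalize hu
  have hsep (x) (hx : x ≠ 0) := eq_separated_of_homogeneous hhom hx
  rw [← finrank_euclideanSpace_fin (𝕜 := ℝ) (n := n)] at hkn hlt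
  simp only [laplacian_eq_innerProductSpace_laplacian] at heq hstab
  intro x hx
  rw [hsep x hx, separated, hw.eq_zero_of_hardyRellichConst_lt hp hk hk₀ hkn hsep heq
    (fun φ hφ ↦ hstab φ hφ.contDiff hφ.hasCompactSupport hφ.tsupport_subset) hlt hx, zero_mul]
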